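/- Let (ℛ, d) be a metric space with a distinguished point 0, with metric completion (ℛ̄, d), let F : ℛ → ℝ be lower semicontinuous, and let F̄ : ℛ̄ → ℝ ∪ {+∞} be its greatest lsc extension, F̄(u) = sup_{ε>0} inf { F(v) : v ∈ ℛ, d(u,v) ≤ ε }. Let ℳ = { u ∈ ℛ̄ : F̄(u) = inf_{ℛ̄} F̄ }, let G be a group acting on ℛ by d-isometries, and set d_G(Gu, Gv) := inf_{f,g ∈ G} d(f.u, g.v). Assume F is G-invariant, that there exist C, D > 0 with F(u) ≥ C · d_G(G0, Gu) − D for all u ∈ ℛ, and that every sequence φ_j ∈ ℛ̄ with F̄(φ_j) → inf_{ℛ̄} F̄ and d(0, φ_j) bounded has a subsequence d-converging to some element of ℳ. Then ℳ is nonempty. -/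

import Mathlib

open UniformSpace Filter Topology

/-- The greatest lower semicontinuous extension of `F : X → ℝ` to the metric completion of `X`:
`extF F u = sup_{ε>0} inf { F v : v ∈ X, dist u v ≤ ε }`, with values in `ℝ ∪ {±∞}`. -/
noncomputable def extF {X : Type*} [MetricSpace X] (F : X → ℝ) (u : Completion X) : EReal :=
  ⨆ (ε : ℝ) (_ : 0 < ε), ⨅ (v : X) (_ : dist u (v : Completion X) ≤ ε), (F v : EReal)

/-- The induced distance between the `G`-orbits of two points:
`dOrbit G u v = inf_{f,g ∈ G} dist (f.u) (g.v)`. -/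
noncomputable def dOrbit {X : Type*} [MetricSpace X] (G : Type*) [Group G] [MulAction G X]
    (u v : X) : ℝ :=
  ⨅ p : G × G, dist (p.1 • u) (p.2 • v)

/-!
A minimizing sequence may be chosen with `F` decreasing along it, hence with `F` bounded above, and
coercivity then bounds the orbit distances to the base point. Since `F` is `G`-invariant and `G`
acts by isometries, each term may be moved within its orbit until it lies at bounded distance from
the base point itself. The extension `extF F` has the same infimum as `F` and is lower
semicontinuous, so every limit of a subsequence is a minimizer.
-/

lemma le_of_lowerSemicontinuousAt_of_tendsto {X ι α : Type*} [TopologicalSpace X] [LinearOrder α]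
    [TopologicalSpace α] [ClosedIciTopology α] {f : X → α} {u : X} {a : α} {l : Filter ι}
    [l.NeBot] {φ : ι → X} (hf : LowerSemicontinuousAt f u) (hφ : Tendsto φ l (𝓝 u))
    (hfφ : Tendsto (fun j => f (φ j)) l (𝓝 a)) : f u ≤ a := by
  by_contra! h
  obtain ⟨b, hab, c, hcu, hbc⟩ := h.exists_disjoint_Iio_Ioi
  obtain ⟨j, hcj, hjb⟩ := ((hφ.eventually (hf c hcu)).and (hfφ.eventually_lt_const hab)).exists
  exact (hbc _ hjb _ hcj).false

section Extension

variable {X : Type*} [MetricSpace X] (F : X → ℝ)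

lemma extF_coe_le (v : X) : extF F v ≤ F v :=
  iSup₂_le fun _ hε => iInf₂_le v ((dist_self _).trans_le hε.le)

lemma iInf_closedBall_le_extF {ε : ℝ} (hε : 0 < ε) (u : Completion X) :
    ⨅ (v : X) (_ : dist u (v : Completion X) ≤ ε), (F v : EReal) ≤ extF F u :=
  le_iSup₂_of_le ε hε le_rfl

lemma iInf_le_extF (u : Completion X) : ⨅ v : X, (F v : EReal) ≤ extF F u :=
  (le_iInf₂ fun v _ => iInf_le _ v).trans (iInf_closedBall_le_extF F one_pos u)

lemma iInf_extF : ⨅ u, extF F u = ⨅ v : X, (F v : EReal) :=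
  le_antisymm (le_iInf fun v => (iInf_le _ _).trans (extF_coe_le F v)) (le_iInf (iInf_le_extF F))

lemma lowerSemicontinuous_extF : LowerSemicontinuous (extF F) := by
  intro u a ha
  simp only [extF, lt_iSup_iff] at ha
  obtain ⟨ε, hε, haε⟩ := ha
  filter_upwards [Metric.ball_mem_nhds u (half_pos hε)] with w hw
  refine haε.trans_le (le_trans ?_ (iInf_closedBall_le_extF F (half_pos hε) w))
  refine le_iInf₂ fun v hwv => iInf₂_le v ?_
  calc dist u (v : Completion X) ≤ dist u w + dist w v := dist_triangle _ _ _
    _ ≤ ε / 2 + ε / 2 := add_le_add (Metric.mem_ball'.mp hw).le hwv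
    _ = ε := add_halves ε

variable {F}

lemma tendsto_extF_coe {ι : Type*} {l : Filter ι} {φ : ι → X}
    (hφ : Tendsto (fun j => (F (φ j) : EReal)) l (𝓝 (⨅ v : X, (F v : EReal)))) :
    Tendsto (fun j => extF F (φ j)) l (𝓝 (⨅ u, extF F u)) := by
  rw [iInf_extF]
  exact tendsto_of_tendsto_of_tendsto_of_le_of_le tendsto_const_nhds hφ
    (fun j => iInf_le_extF F (φ j)) (fun j => extF_coe_le F (φ j))

end Extension

section Orbit

variable {X : Type*} [MetricSpace X] {G : Type*} [Group G] [MulAction G X] [IsIsometricSMul G X]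

lemma exists_dist_smul_lt_of_dOrbit_lt {x y : X} {r : ℝ} (h : dOrbit G x y < r) :
    ∃ g : G, dist x (g • y) < r := by
  obtain ⟨⟨f, g⟩, hfg⟩ := exists_lt_of_ciInf_lt h
  refine ⟨f⁻¹ * g, ?_⟩
  rwa [← dist_smul f, ← mul_smul, mul_inv_cancel_left]

lemma exists_bounded_seq_tendsto_iInf {F : X → ℝ} (x₀ : X)
    (hinv : ∀ (g : G) (u : X), F (g • u) = F u)
    (hcoercive : ∀ a : ℝ, ∃ R : ℝ, ∀ u : X, F u ≤ a → dOrbit G x₀ u ≤ R) :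
    ∃ φ : ℕ → X, Tendsto (fun j => (F (φ j) : EReal)) atTop (𝓝 (⨅ u : X, (F u : EReal))) ∧
      ∃ R : ℝ, ∀ j, dist x₀ (φ j) ≤ R := by
  obtain ⟨t, ht_anti, ht_lim, ht_range⟩ := exists_seq_tendsto_sInf
    (S := Set.range fun u : X => (F u : EReal)) ⟨_, x₀, rfl⟩ (OrderBot.bddBelow _)
  choose ψ hψ using ht_range
  have hψ_le (j : ℕ) : F (ψ j) ≤ F (ψ 0) := by
    simpa only [← hψ, EReal.coe_le_coe_iff] using ht_anti j.zero_le
  obtain ⟨R, hR⟩ := hcoercive (F (ψ 0))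
  have hclose (j : ℕ) : ∃ g : G, dist x₀ (g • ψ j) < R + 1 :=
    exists_dist_smul_lt_of_dOrbit_lt ((hR _ (hψ_le j)).trans_lt (lt_add_one R))
  choose g hg using hclose
  refine ⟨fun j => g j • ψ j, ?_, R + 1, fun j => (hg j).le⟩
  simpa only [hinv, hψ, sInf_range] using ht_lim

end Orbit

theorem stmt_11_general {X : Type*} [MetricSpace X] (x₀ : X)
    (G : Type*) [Group G] [MulAction G X] [IsIsometricSMul G X] {F : X → ℝ}
    (hinv : ∀ (g : G) (u : X), F (g • u) = F u)
    (hcoercive : ∀ a : ℝ, ∃ R : ℝ, ∀ u : X, F u ≤ a → dOrbit G x₀ u ≤ R)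
    (hcpt : ∀ φ : ℕ → X,
      Tendsto (fun j => (F (φ j) : EReal)) atTop (𝓝 (⨅ v : X, (F v : EReal))) →
      (∃ R : ℝ, ∀ j, dist x₀ (φ j) ≤ R) →
      ∃ u : Completion X, ∃ σ : ℕ → ℕ, StrictMono σ ∧
        Tendsto (fun k => (φ (σ k) : Completion X)) atTop (𝓝 u)) :
    ∃ u : Completion X, extF F u = ⨅ v : Completion X, extF F v := by
  obtain ⟨φ, hφ_min, hφ_bdd⟩ := exists_bounded_seq_tendsto_iInf x₀ hinv hcoercive
  obtain ⟨u, σ, hσ, hu⟩ := hcpt φ hφ_min hφ_bdd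
  have hσ_min : Tendsto (fun k => extF F (φ (σ k))) atTop (𝓝 (⨅ v, extF F v)) :=
    (tendsto_extF_coe hφ_min).comp hσ.tendsto_atTop
  have hle : extF F u ≤ ⨅ v, extF F v :=
    le_of_lowerSemicontinuousAt_of_tendsto (lowerSemicontinuous_extF F u) hu hσ_min
  exact ⟨u, hle.antisymm (iInf_le _ u)⟩

/-- If `F` is `G`-invariant and proper with respect to the orbit pseudometric, and minimizing
sequences at bounded distance from the base point subconverge to minimizers, then the set of
minimizers of the greatest lsc extension of `F` on the metric completion is nonempty. -/
theorem stmt_11 {X : Type*} [MetricSpace X] (x₀ : X)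
    (G : Type*) [Group G] [MulAction G X]
    (F : X → ℝ) (hF : LowerSemicontinuous F)
    (M : Set (Completion X))
    (hM : M = {u : Completion X | extF F u = ⨅ v : Completion X, extF F v})
    (hiso : ∀ g : G, Isometry (fun x : X => g • x))
    (hinv : ∀ g : G, ∀ u : X, F (g • u) = F u)
    (hproper : ∃ C : ℝ, 0 < C ∧ ∃ D : ℝ, 0 < D ∧
      ∀ u : X, F u ≥ C * dOrbit G x₀ u - D)
    (hcpt : ∀ φ : ℕ → Completion X,
      Tendsto (fun j => extF F (φ j)) atTop (𝓝 (⨅ v : Completion X, extF F v)) →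
      (∃ C : ℝ, ∀ j, dist ((x₀ : Completion X)) (φ j) ≤ C) →
      ∃ u ∈ M, ∃ σ : ℕ → ℕ, StrictMono σ ∧ Tendsto (fun k => φ (σ k)) atTop (𝓝 u)) :
    M.Nonempty := by
  obtain ⟨C, hC, D, -, hgrowth⟩ := hproper
  have : IsIsometricSMul G X := ⟨hiso⟩
  have hcoercive (a : ℝ) : ∃ R : ℝ, ∀ u : X, F u ≤ a → dOrbit G x₀ u ≤ R :=
    ⟨(a + D) / C, fun u hu => (le_div_iff₀' hC).mpr (by linarith [hgrowth u])⟩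
  subst hM
  refine stmt_11_general x₀ G hinv hcoercive fun φ hφ_min ⟨R, hR⟩ => ?_
  obtain ⟨u, -, hu⟩ := hcpt (fun j => φ j) (tendsto_extF_coe hφ_min)
    ⟨R, fun j => (Completion.dist_eq x₀ (φ j)).trans_le (hR j)⟩
  exact ⟨u, hu⟩
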